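/- Let 0 < κ < 1, w ≠ 0, 0 < β < 1, α > 1, γ ≥ 0, μ > 0 and t > 0. Assume 1/(1+Γ(1−β)u) ≤ E_β(−u) ≤ 1/(1+u/Γ(1+β)) for u ≥ 0 and that u ↦ E_β(−u) is nonincreasing on [0,∞). Then lim_{ε→0⁺} ∫_ℝ ( E_β(−μ|λ|^α(1+λ²ε^{2β/α})^{γ/2} t^β)·√(f_{κ,w}(λ ε^{β/α})) − E_β(−μ t^β|λ|^α)·√(f_{κ,w}(0)) )² dλ = 0. (The mean-square convergence at the core of Theorem 4: it expresses E|U_ε(t,x) − U₀(t,x)|² → 0 for the rescaled solutions U_ε(t,x) = ε^{−β/(2α)} u(t/ε, x/ε^{β/α}) of the fractional Riesz-Bessel equation ∂^β_t u = −μ(I−Δ)^{α/2}(−Δ)^{γ/2}u with stationary Gaussian initial condition having spectral density f_{κ,w}.) -/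

import Mathlib

open Real MeasureTheory Filter

noncomputable def c1 (k : ℝ) : ℝ := (2:ℝ) ^ ((1 - k)/2) / (Real.sqrt π * Real.Gamma (k/2))

noncomputable def c2 (k : ℝ) : ℝ := 1 / (2 * Real.Gamma k * Real.cos (k * π / 2))

/-- Modified Bessel function of the second kind:
`K ν z = (1/2) ∫₀^∞ s^(ν−1) exp(−(z/2)(s + 1/s)) ds`. -/
noncomputable def besselK (ν z : ℝ) : ℝ :=
  (1/2) * ∫ s in Set.Ioi (0:ℝ), s ^ (ν - 1) * Real.exp (-(z/2) * (s + 1/s))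

/-- The spectral density `f_{κ,w}` of the covariance `cos(wx)/(1+x²)^{κ/2}`. -/
noncomputable def specDen (k w lam : ℝ) : ℝ :=
  (c1 k / 2) * (besselK ((k-1)/2) |lam + w| * |lam + w| ^ ((k-1)/2)
    + besselK ((k-1)/2) |lam - w| * |lam - w| ^ ((k-1)/2))

/-- The Mittag-Leffler function `E_β(z) = Σ_{k≥0} z^k / Γ(βk+1)` (real argument). -/
noncomputable def mittagLeffler (b z : ℝ) : ℝ := ∑' k : ℕ, z ^ k / Real.Gamma (b * k + 1)

lemma ml_contOn (b : ℝ) (hb0 : 0 < b) (hb1 : b < 1)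
    (hlow : ∀ u : ℝ, 0 ≤ u → 1 / (1 + Real.Gamma (1-b) * u) ≤ mittagLeffler b (-u)) :
    ContinuousOn (fun u => mittagLeffler b (-u)) (Set.Ici 0) := by
  have hG : 0 < Real.Gamma (1-b) := Real.Gamma_pos_of_pos (by linarith)
  have hpos : ∀ u : ℝ, 0 ≤ u → 0 < mittagLeffler b (-u) := fun u hu =>
    lt_of_lt_of_le (by positivity) (hlow u hu)
  have hGk : ∀ n : ℕ, 0 < Real.Gamma (b * n + 1) := fun n =>
    Real.Gamma_pos_of_pos (by positivity)
  have hsum : ∀ R : ℝ, 0 ≤ R → Summable (fun n : ℕ => R ^ n / Real.Gamma (b * n + 1)) := by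
    intro R hR
    have h1 : Summable (fun n : ℕ => (-R) ^ n / Real.Gamma (b * n + 1)) := by
      by_contra h
      have := hpos R hR
      unfold mittagLeffler at this
      rw [tsum_eq_zero_of_not_summable h] at this
      exact lt_irrefl _ this
    have h2 := h1.norm
    refine h2.congr (fun n => ?_)
    rw [norm_div, norm_pow, norm_neg, Real.norm_of_nonneg hR, Real.norm_of_nonneg (hGk n).le]
  intro u hu
  have hu : 0 ≤ u := hu
  have hc : ContinuousOn (fun u => mittagLeffler b (-u)) (Set.Icc (-(u+1)) (u+1)) := by
    unfold mittagLeffler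
    refine continuousOn_tsum (u := fun n : ℕ => (u+1) ^ n / Real.Gamma (b * n + 1)) ?_
      (hsum _ (by linarith)) ?_
    · intro n
      fun_prop
    · intro n x hx
      rw [norm_div, norm_pow, norm_neg, Real.norm_of_nonneg (hGk n).le]
      have : ‖x‖ ≤ u+1 := abs_le.2 hx
      have := hGk n
      gcongr
  exact (hc.continuousAt (Icc_mem_nhds (by linarith) (by linarith))).continuousWithinAt

lemma bK_inv_integrable (ν a : ℝ) (hν : ν < 0) (ha : 0 < a) :
    IntegrableOn (fun s : ℝ => s ^ (ν - 1) * Real.exp (-(a / s))) (Set.Ioi 0) := by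
  have h := integrableOn_rpow_mul_exp_neg_mul_rpow (p := 1) (s := -ν - 1) (b := a)
    (by linarith) one_pos ha
  rw [← integrableOn_Ioi_comp_rpow_iff _ (p := -1) (by norm_num)] at h
  refine h.congr_fun (fun s hs => ?_) measurableSet_Ioi
  have hs : 0 < s := hs
  simp only [smul_eq_mul, Real.rpow_one]
  rw [← Real.rpow_mul hs.le, ← mul_assoc, abs_neg, abs_one, one_mul, ← Real.rpow_add hs,
    Real.rpow_neg_one]
  congr 2 <;> ring

lemma bK_inv_integral (ν a : ℝ) (hν : ν < 0) (ha : 0 < a) :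
    ∫ s in Set.Ioi (0:ℝ), s ^ (ν - 1) * Real.exp (-(a / s)) = a ^ ν * Real.Gamma (-ν) := by
  have h := Real.integral_rpow_mul_exp_neg_mul_Ioi (a := -ν) (r := a) (by linarith) ha
  rw [← integral_comp_rpow_Ioi _ (p := -1) (by norm_num)] at h
  rw [one_div, Real.inv_rpow ha.le, Real.rpow_neg ha.le, inv_inv] at h
  rw [← h]
  refine setIntegral_congr_fun measurableSet_Ioi (fun s hs => ?_)
  have hs : 0 < s := hs
  simp only [smul_eq_mul]
  rw [← Real.rpow_mul hs.le, ← mul_assoc, abs_neg, abs_one, one_mul, ← Real.rpow_add hs,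
    Real.rpow_neg_one]
  congr 2; ring

lemma bK_pointwise (ν z a s : ℝ) (ha : 0 ≤ a) (hz : a ≤ z) (hs : 0 < s) :
    s ^ (ν - 1) * Real.exp (-(z/2) * (s + 1/s)) ≤
      Real.exp (-(z/2)) * (s ^ (ν - 1) * Real.exp (-(a / 4 / s))) := by
  have h2 : 2 ≤ s + 1/s := by
    have : s + 1/s - 2 = (s-1)^2/s := by field_simp; ring
    have : 0 ≤ (s-1)^2/s := by positivity
    linarith
  have h3 : a / 4 / s ≤ z/4 * (s + 1/s) := by
    have : a / 4 / s = a/4 * (1/s) := by ring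
    rw [this]
    have : 0 < 1/s := by positivity
    gcongr ?_ * ?_
    all_goals linarith
  rw [mul_left_comm, ← Real.exp_add]
  gcongr
  nlinarith

lemma bK_nonneg (ν z : ℝ) : 0 ≤ besselK ν z := by
  unfold besselK
  have : 0 ≤ ∫ s in Set.Ioi (0:ℝ), s ^ (ν - 1) * Real.exp (-(z/2) * (s + 1/s)) :=
    setIntegral_nonneg measurableSet_Ioi (fun s hs => by
      have hs : 0 < s := hs
      positivity)
  linarith

lemma bK_le (ν z : ℝ) (hν : ν < 0) (hz : 0 < z) :
    besselK ν z ≤ (1/2 * (4:ℝ)⁻¹ ^ ν * Real.Gamma (-ν)) * (z ^ ν * Real.exp (-(z/2))) := by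
  have h : ∫ s in Set.Ioi (0:ℝ), s ^ (ν - 1) * Real.exp (-(z/2) * (s + 1/s)) ≤
      ∫ s in Set.Ioi (0:ℝ), Real.exp (-(z/2)) * (s ^ (ν - 1) * Real.exp (-(z / 4 / s))) := by
    refine integral_mono_of_nonneg ?_ ((bK_inv_integrable ν (z/4) hν (by positivity)).const_mul _) ?_
    · filter_upwards [ae_restrict_mem measurableSet_Ioi] with s hs
      have hs : 0 < s := hs
      simp only [Pi.zero_apply]
      positivity
    · filter_upwards [ae_restrict_mem measurableSet_Ioi] with s hs
      exact bK_pointwise ν z z s hz.le le_rfl hs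
  rw [integral_const_mul, bK_inv_integral ν _ hν (by positivity), div_eq_mul_inv z 4,
    Real.mul_rpow hz.le (by norm_num)] at h
  unfold besselK
  nlinarith

lemma bK_meas (ν : ℝ) : Measurable (besselK ν) := by
  unfold besselK
  refine Measurable.const_mul ?_ _
  refine (StronglyMeasurable.integral_prod_right
    (f := fun z s : ℝ => s ^ (ν - 1) * Real.exp (-(z/2) * (s + 1/s))) ?_).measurable
  refine Measurable.stronglyMeasurable ?_
  unfold Function.uncurry
  fun_prop

lemma bK_cont (ν z : ℝ) (hν : ν < 0) (hz : 0 < z) : ContinuousAt (besselK ν) z := by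
  unfold besselK
  refine ContinuousAt.mul continuousAt_const ?_
  refine continuousAt_of_dominated
    (bound := fun s => s ^ (ν - 1) * Real.exp (-(z/2/4 / s))) ?_ ?_
      (bK_inv_integrable ν (z/2/4) hν (by positivity)) ?_
  · refine Eventually.of_forall (fun x => Measurable.aestronglyMeasurable ?_)
    fun_prop
  · filter_upwards [Ioi_mem_nhds (show z/2 < z by linarith)] with x hx
    have hx : z/2 < x := hx
    filter_upwards [ae_restrict_mem measurableSet_Ioi] with s hs
    have hs : 0 < s := hs
    rw [Real.norm_of_nonneg (by positivity)]
    refine (bK_pointwise ν x (z/2) s (by positivity) hx.le hs).trans ?_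
    refine mul_le_of_le_one_left (by positivity) ?_
    rw [Real.exp_le_one_iff]
    linarith
  · refine Eventually.of_forall (fun s => ?_)
    fun_prop

/-- building block of the spectral density -/
noncomputable def hK (ν x : ℝ) : ℝ := besselK ν |x| * |x| ^ ν

lemma hK_nonneg (ν x : ℝ) : 0 ≤ hK ν x :=
  mul_nonneg (bK_nonneg _ _) (by positivity)

lemma hK_meas (ν : ℝ) : Measurable (hK ν) := by
  unfold hK
  have := bK_meas ν
  have h2 : Measurable (fun x : ℝ => |x|) := continuous_abs.measurable
  exact (this.comp h2).mul (h2.pow_const _)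

lemma hK_cont (ν x : ℝ) (hν : ν < 0) (hx : x ≠ 0) : ContinuousAt (hK ν) x := by
  unfold hK
  have h0 : 0 < |x| := abs_pos.2 hx
  refine ContinuousAt.mul ?_ ?_
  · exact ContinuousAt.comp (f := fun x : ℝ => |x|) (g := besselK ν) (bK_cont ν _ hν h0)
      continuous_abs.continuousAt
  · exact continuous_abs.continuousAt.rpow_const (Or.inl h0.ne')

lemma hK_int (ν : ℝ) (hν : ν < 0) (hν2 : -1/2 < ν) : Integrable (hK ν) := by
  have h := integrableOn_rpow_mul_exp_neg_mul_rpow (p := 1) (s := 2*ν) (b := 1/2)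
    (by linarith) one_pos (by norm_num)
  have h2 : Integrable (fun x : ℝ => (fun y : ℝ => y ^ (2*ν) * Real.exp (-(1/2) * y ^ (1:ℝ))) ‖x‖) := by
    refine (integrable_fun_norm_addHaar (E := ℝ) (F := ℝ) (f := fun y : ℝ => y ^ (2*ν) *
      Real.exp (-(1/2) * y ^ (1:ℝ))) (volume : Measure ℝ)).2 ?_
    simpa using h
  refine (h2.const_mul (1/2 * (4:ℝ)⁻¹ ^ ν * Real.Gamma (-ν))).mono'
    (hK_meas ν).aestronglyMeasurable (Eventually.of_forall fun x => ?_)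
  rw [Real.norm_of_nonneg (hK_nonneg ν x), Real.norm_eq_abs]
  rcases eq_or_ne x 0 with rfl | hx
  · have : ν ≠ 0 := hν.ne
    have h2ν : 2 * ν ≠ 0 := by simpa using this
    simp [hK, Real.zero_rpow this, Real.zero_rpow h2ν]
  · have h0 : 0 < |x| := abs_pos.2 hx
    unfold hK
    have := mul_le_mul_of_nonneg_right (bK_le ν |x| hν h0) (Real.rpow_nonneg h0.le ν)
    refine this.trans (le_of_eq ?_)
    simp only [Real.rpow_one]
    rw [two_mul, Real.rpow_add h0]
    ring_nf

lemma sd_eq (k w x : ℝ) :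
    specDen k w x = c1 k / 2 * (hK ((k-1)/2) (x + w) + hK ((k-1)/2) (x - w)) := rfl

lemma c1_nonneg (k : ℝ) (hk : 0 < k) : 0 ≤ c1 k := by
  unfold c1
  have := Real.Gamma_pos_of_pos (show 0 < k/2 by linarith)
  positivity

lemma sd_nonneg (k w x : ℝ) (hk : 0 < k) : 0 ≤ specDen k w x := by
  rw [sd_eq]
  have := c1_nonneg k hk
  have := hK_nonneg ((k-1)/2) (x+w)
  have := hK_nonneg ((k-1)/2) (x-w)
  positivity

lemma sd_meas (k w : ℝ) : Measurable (specDen k w) := by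
  have h := hK_meas ((k-1)/2)
  have : specDen k w = fun x => c1 k / 2 * (hK ((k-1)/2) (x + w) + hK ((k-1)/2) (x - w)) :=
    funext (sd_eq k w)
  rw [this]
  fun_prop

lemma sd_int (k w : ℝ) (hk0 : 0 < k) (hk1 : k < 1) : Integrable (specDen k w) := by
  have h := hK_int ((k-1)/2) (by linarith) (by linarith)
  exact ((h.comp_add_right w).add (h.comp_sub_right w)).const_mul _

lemma sd_cont (k w : ℝ) (hk1 : k < 1) (hw : w ≠ 0) : ContinuousAt (specDen k w) 0 := by
  have : specDen k w = fun x => c1 k / 2 * (hK ((k-1)/2) (x + w) + hK ((k-1)/2) (x - w)) :=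
    funext (sd_eq k w)
  rw [this]
  refine continuousAt_const.mul (ContinuousAt.add ?_ ?_)
  · refine ContinuousAt.comp (f := fun x => x + w) (g := hK ((k-1)/2))
      (hK_cont _ _ (by linarith) (by simpa)) (by fun_prop)
  · refine ContinuousAt.comp (f := fun x => x - w) (g := hK ((k-1)/2))
      (hK_cont _ _ (by linarith) (by simpa)) (by fun_prop)

lemma core_tendsto (g : ℝ → ℝ → ℝ) (g0 f : ℝ → ℝ) (C α : ℝ) (hα : 1 < α)
    (hg : ∀ d, Measurable (g d)) (hg0 : Measurable g0)
    (hgn : ∀ d x, 0 ≤ g d x) (hgb : ∀ d x, g d x ≤ C * (1 + |x|) ^ (-α))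
    (hg0n : ∀ x, 0 ≤ g0 x) (hg0b : ∀ x, g0 x ≤ C * (1 + |x|) ^ (-α))
    (hlim : ∀ x, Tendsto (fun d => g d x) (nhdsWithin 0 (Set.Ioi 0)) (nhds (g0 x)))
    (hf : Measurable f) (hfn : ∀ x, 0 ≤ f x) (hfi : Integrable f) (hfc : ContinuousAt f 0) :
    Tendsto (fun d : ℝ => ∫ x : ℝ, (g d x * √(f (x * d)) - g0 x * √(f 0)) ^ 2)
      (nhdsWithin 0 (Set.Ioi 0)) (nhds 0) := by
  obtain ⟨r, hr, hfr⟩ : ∃ r > 0, ∀ x : ℝ, |x| < r → f x ≤ f 0 + 1 := by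
    have h1 : ∀ᶠ x in nhds (0:ℝ), f x < f 0 + 1 := hfc.eventually_lt_const (by linarith)
    obtain ⟨r, hr, h⟩ := Metric.eventually_nhds_iff.1 h1
    exact ⟨r, hr, fun x hx => (h (by simpa [Real.dist_eq] using hx)).le⟩
  have h00 := hfn 0
  set P : ℝ → ℝ := fun x => C * (1 + |x|) ^ (-α) with hP
  have hPm : Measurable P := by
    have h2 : Measurable (fun x : ℝ => |x|) := continuous_abs.measurable
    exact ((h2.const_add 1).pow_const _).const_mul _
  have hPn : ∀ x, 0 ≤ P x := fun x => (hg0n x).trans (hg0b x)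
  have hP2 : Integrable (fun x => P x ^ 2) := by
    have h1 := (integrable_one_add_norm (E := ℝ) (μ := volume) (r := 2 * α)
      (by simp; linarith)).const_mul (C ^ 2)
    refine h1.congr (Eventually.of_forall fun x => ?_)
    simp only [hP, mul_pow]
    rw [← Real.rpow_natCast ((1 + |x|) ^ (-α)) 2, ← Real.rpow_mul (by positivity), Real.norm_eq_abs]
    congr 2
    push_cast
    ring
  have hF : ∀ d x, (g d x * √(f (x * d)) - g0 x * √(f 0)) ^ 2 ≤
      2 * P x ^ 2 * f (x * d) + 2 * P x ^ 2 * f 0 := by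
    intro d x
    have e1 : g d x ^ 2 ≤ P x ^ 2 := pow_le_pow_left₀ (hgn d x) (hgb d x) 2
    have e2 : g0 x ^ 2 ≤ P x ^ 2 := pow_le_pow_left₀ (hg0n x) (hg0b x) 2
    have s1 := Real.sq_sqrt (hfn (x * d))
    have s2 := Real.sq_sqrt h00
    have m1 := mul_le_mul_of_nonneg_right e1 (hfn (x * d))
    have m2 := mul_le_mul_of_nonneg_right e2 h00
    have q := sq_nonneg (g d x * √(f (x * d)) + g0 x * √(f 0))
    have t1 : (g d x * √(f (x * d))) ^ 2 = g d x ^ 2 * f (x * d) := by rw [mul_pow, s1]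
    have t2 : (g0 x * √(f 0)) ^ 2 = g0 x ^ 2 * f 0 := by rw [mul_pow, s2]
    nlinarith
  set A : ℝ → ℝ → ℝ := fun d x => if |x * d| < r then
    (g d x * √(f (x * d)) - g0 x * √(f 0)) ^ 2 else 2 * P x ^ 2 * f 0 with hA
  set K : ℝ → ℝ := fun d => 2 * (C * (r / d) ^ (-α)) ^ 2 with hK
  have hAm : ∀ d, Measurable (A d) := by
    intro d
    have hs : MeasurableSet {x : ℝ | |x * d| < r} :=
      measurableSet_lt (by fun_prop) measurable_const
    have := hg d
    refine Measurable.ite hs ?_ ?_ <;> fun_prop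
  have hAn : ∀ d x, 0 ≤ A d x := by
    intro d x
    simp only [hA]
    split_ifs <;> positivity
  have hAb : ∀ d x, A d x ≤ P x ^ 2 * (2 * (f 0 + 1) + 2 * f 0) := by
    intro d x
    have p := sq_nonneg (P x)
    simp only [hA]
    split_ifs with h
    · have := hF d x
      have := mul_le_mul_of_nonneg_left (hfr _ h) p
      nlinarith
    · nlinarith
  have hbi : Integrable (fun x => P x ^ 2 * (2 * (f 0 + 1) + 2 * f 0)) := hP2.mul_const _
  have hAi : ∀ d, Integrable (A d) := fun d => hbi.mono' (hAm d).aestronglyMeasurable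
    (Eventually.of_forall fun x => by rw [Real.norm_of_nonneg (hAn d x)]; exact hAb d x)
  have hAlim : Tendsto (fun d => ∫ x, A d x) (nhdsWithin 0 (Set.Ioi 0)) (nhds 0) := by
    have := tendsto_integral_filter_of_dominated_convergence (μ := volume) (F := A)
      (f := fun _ => (0:ℝ)) (l := nhdsWithin 0 (Set.Ioi 0))
      (fun x => P x ^ 2 * (2 * (f 0 + 1) + 2 * f 0))
      (Eventually.of_forall fun d => (hAm d).aestronglyMeasurable)
      (Eventually.of_forall fun d => Eventually.of_forall fun x => by
        rw [Real.norm_of_nonneg (hAn d x)]; exact hAb d x) hbi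
      (Eventually.of_forall fun x => ?_)
    · simpa using this
    · have hxd : Tendsto (fun d : ℝ => x * d) (nhdsWithin 0 (Set.Ioi 0)) (nhds 0) := by
        have : ContinuousAt (fun d : ℝ => x * d) 0 := by fun_prop
        have h := this.tendsto
        simp only [mul_zero] at h
        exact h.mono_left nhdsWithin_le_nhds
      have hfx : Tendsto (fun d : ℝ => √(f (x * d))) (nhdsWithin 0 (Set.Ioi 0)) (nhds √(f 0)) :=
        (hfc.tendsto.comp hxd).sqrt
      have hl : Tendsto (fun d => (g d x * √(f (x * d)) - g0 x * √(f 0)) ^ 2)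
          (nhdsWithin 0 (Set.Ioi 0)) (nhds 0) := by
        have := (((hlim x).mul hfx).sub_const (g0 x * √(f 0))).pow 2
        simpa using this
      refine hl.congr' ?_
      have hab : Tendsto (fun d : ℝ => |x * d|) (nhdsWithin 0 (Set.Ioi 0)) (nhds 0) := by
        simpa using hxd.abs
      filter_upwards [hab.eventually_lt_const hr] with d hd
      simp only [hA, if_pos hd]
  have hDi : ∀ d > 0, Integrable (fun x => K d * f (x * d)) := fun d hd =>
    (hfi.comp_mul_right' (ne_of_gt hd)).const_mul _
  have hDlim : Tendsto (fun d => ∫ x, K d * f (x * d)) (nhdsWithin 0 (Set.Ioi 0)) (nhds 0) := by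
    have h1 : Tendsto (fun d : ℝ => 2 * (C * r ^ (-α)) ^ 2 * (∫ x, f x) * d ^ (2 * α - 1))
        (nhdsWithin 0 (Set.Ioi 0)) (nhds 0) := by
      have : ContinuousAt (fun d : ℝ => d ^ (2 * α - 1)) 0 :=
        Real.continuousAt_rpow_const _ _ (Or.inr (by linarith))
      have h := this.tendsto
      simp only [Real.zero_rpow (show 2 * α - 1 ≠ 0 by linarith)] at h
      have h' := (h.mono_left (nhdsWithin_le_nhds (s := Set.Ioi 0))).const_mul
        (2 * (C * r ^ (-α)) ^ 2 * (∫ x, f x))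
      simpa using h'
    refine h1.congr' ?_
    filter_upwards [self_mem_nhdsWithin] with d hd
    have hd : 0 < d := hd
    rw [integral_const_mul, Measure.integral_comp_mul_right, abs_of_pos (by positivity)]
    simp only [hK, smul_eq_mul]
    rw [Real.div_rpow hr.le hd.le, Real.rpow_neg hd.le, div_inv_eq_mul, Real.rpow_sub_one hd.ne',
      two_mul α, Real.rpow_add hd]
    ring
  refine squeeze_zero' (Eventually.of_forall fun d => integral_nonneg fun x => sq_nonneg _) ?_
    (by simpa using hAlim.add hDlim)
  filter_upwards [self_mem_nhdsWithin] with d hd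
  have hd : 0 < d := hd
  rw [← integral_add (hAi d) (hDi d hd)]
  refine integral_mono_of_nonneg (Eventually.of_forall fun x => sq_nonneg _)
    ((hAi d).add (hDi d hd)) (Eventually.of_forall fun x => ?_)
  have hKn : 0 ≤ K d := by simp only [hK]; positivity
  have hfx := hfn (x * d)
  simp only [hA]
  split_ifs with h
  · have := mul_nonneg hKn hfx
    linarith
  · have hx : r / d ≤ |x| := by
      rw [abs_mul, abs_of_pos hd, not_lt] at h
      rwa [div_le_iff₀ hd]
    have hC : 0 ≤ C := by
      have := hPn 0
      simpa [hP] using this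
    have hPK : P x ≤ C * (r / d) ^ (-α) := by
      refine mul_le_mul_of_nonneg_left ?_ hC
      exact Real.rpow_le_rpow_of_nonpos (by positivity) (by linarith) (by linarith)
    have h2 : 2 * P x ^ 2 ≤ K d := by
      have := pow_le_pow_left₀ (hPn x) hPK 2
      simp only [hK]; linarith
    have := mul_le_mul_of_nonneg_right h2 hfx
    have := hF d x
    linarith

lemma M_bound (c α x : ℝ) (hc : 0 < c) (hα : 1 < α) :
    1 / (1 + c * |x| ^ α) ≤ (2 ^ α / min 1 c) * (1 + |x|) ^ (-α) := by
  have hm : 0 < min 1 c := lt_min one_pos hc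
  have hx := abs_nonneg x
  have h1 : ((1 + |x|) / 2) ^ α ≤ 1 + |x| ^ α := by
    rcases le_total |x| 1 with h | h
    · have : ((1 + |x|) / 2) ^ α ≤ 1 := Real.rpow_le_one (by positivity) (by linarith) (by linarith)
      have : 0 ≤ |x| ^ α := by positivity
      linarith
    · have : ((1 + |x|) / 2) ^ α ≤ |x| ^ α :=
        Real.rpow_le_rpow (by positivity) (by linarith) (by linarith)
      linarith
  have h2 : min 1 c * (1 + |x| ^ α) ≤ 1 + c * |x| ^ α := by
    have := mul_le_mul_of_nonneg_right (min_le_right 1 c) (show 0 ≤ |x| ^ α by positivity)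
    have := min_le_left 1 c
    linarith
  have h3 : min 1 c * ((1 + |x|) / 2) ^ α ≤ 1 + c * |x| ^ α :=
    (mul_le_mul_of_nonneg_left h1 hm.le).trans h2
  have h4 : 1 / (1 + c * |x| ^ α) ≤ 1 / (min 1 c * ((1 + |x|) / 2) ^ α) :=
    one_div_le_one_div_of_le (by positivity) h3
  refine h4.trans (le_of_eq ?_)
  rw [Real.div_rpow (by positivity) (by norm_num), Real.rpow_neg (by positivity)]
  field_simp

theorem frbe_mean_square_convergence (k w b α γ μ t : ℝ)
    (hk0 : 0 < k) (hk1 : k < 1) (hw : w ≠ 0)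
    (hb0 : 0 < b) (hb1 : b < 1) (hα : 1 < α) (hγ : 0 ≤ γ) (hμ : 0 < μ) (ht : 0 < t)
    (hlow : ∀ u : ℝ, 0 ≤ u → 1 / (1 + Real.Gamma (1-b) * u) ≤ mittagLeffler b (-u))
    (hupp : ∀ u : ℝ, 0 ≤ u → mittagLeffler b (-u) ≤ 1 / (1 + u / Real.Gamma (1+b)))
    (hmono : ∀ u v : ℝ, 0 ≤ u → u ≤ v → mittagLeffler b (-v) ≤ mittagLeffler b (-u))
    : Filter.Tendsto
      (fun ε : ℝ => ∫ lam : ℝ,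
        (mittagLeffler b (-(μ * |lam| ^ α * (1 + lam^2 * ε ^ (2*b/α)) ^ (γ/2) * t ^ b))
            * Real.sqrt (specDen k w (lam * ε ^ (b/α)))
          - mittagLeffler b (-(μ * t ^ b * |lam| ^ α)) * Real.sqrt (specDen k w 0))^2)
      (nhdsWithin 0 (Set.Ioi 0)) (nhds 0) := by
  have hcont := ml_contOn b hb0 hb1 hlow
  have hG : 0 < Real.Gamma (1-b) := Real.Gamma_pos_of_pos (by linarith)
  have hG2 : 0 < Real.Gamma (1+b) := Real.Gamma_pos_of_pos (by linarith)
  have hpos : ∀ u : ℝ, 0 ≤ u → 0 ≤ mittagLeffler b (-u) := fun u hu =>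
    le_trans (by positivity) (hlow u hu)
  have htb : 0 < t ^ b := Real.rpow_pos_of_pos ht b
  have hbase : ∀ d x : ℝ, 0 < 1 + x ^ 2 * d ^ 2 := fun d x => by positivity
  have harg0 : ∀ x : ℝ, 0 ≤ μ * t ^ b * |x| ^ α := fun x => by positivity
  have harg : ∀ d x : ℝ, 0 ≤ μ * |x| ^ α * (1 + x ^ 2 * d ^ 2) ^ (γ/2) * t ^ b := fun d x => by
    positivity
  have hcpow : Continuous (fun x : ℝ => |x| ^ α) :=
    continuous_abs.rpow_const (fun x => Or.inr (by linarith))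
  have hc0 : Continuous (fun x : ℝ => μ * t ^ b * |x| ^ α) := by fun_prop
  have hb0' : ∀ x : ℝ, mittagLeffler b (-(μ * t ^ b * |x| ^ α)) ≤
      (2 ^ α / min 1 (μ * t ^ b / Real.Gamma (1+b))) * (1 + |x|) ^ (-α) := by
    intro x
    refine (hupp _ (harg0 x)).trans ?_
    have := M_bound (μ * t ^ b / Real.Gamma (1+b)) α x (by positivity) hα
    rwa [div_mul_eq_mul_div] at this
  have hcore := core_tendsto
    (fun d x => mittagLeffler b (-(μ * |x| ^ α * (1 + x ^ 2 * d ^ 2) ^ (γ/2) * t ^ b)))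
    (fun x => mittagLeffler b (-(μ * t ^ b * |x| ^ α))) (specDen k w)
    (2 ^ α / min 1 (μ * t ^ b / Real.Gamma (1+b))) α hα ?_ ?_ (fun d x => hpos _ (harg d x)) ?_
    (fun x => hpos _ (harg0 x)) hb0' ?_ (sd_meas k w) (fun x => sd_nonneg k w x hk0)
    (sd_int k w hk0 hk1) (sd_cont k w hk1 hw)
  · have hδ : Tendsto (fun ε : ℝ => ε ^ (b/α)) (nhdsWithin 0 (Set.Ioi 0))
        (nhdsWithin 0 (Set.Ioi 0)) := by
      have hp : 0 < b / α := div_pos hb0 (by linarith)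
      refine tendsto_nhdsWithin_iff.2 ⟨?_, ?_⟩
      · have : ContinuousAt (fun d : ℝ => d ^ (b/α)) 0 :=
          Real.continuousAt_rpow_const _ _ (Or.inr hp.le)
        have h := this.tendsto
        simp only [Real.zero_rpow hp.ne'] at h
        exact h.mono_left nhdsWithin_le_nhds
      · filter_upwards [self_mem_nhdsWithin] with d hd
        exact Real.rpow_pos_of_pos hd _
    refine (hcore.comp hδ).congr' ?_
    filter_upwards [self_mem_nhdsWithin] with ε hε
    have hε : 0 < ε := hε
    have : (ε ^ (b/α)) ^ 2 = ε ^ (2*b/α) := by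
      rw [← Real.rpow_natCast (ε ^ (b/α)) 2, ← Real.rpow_mul hε.le]
      congr 1
      push_cast
      ring
    simp only [Function.comp_apply, this]
  · intro d
    have hc : Continuous (fun x : ℝ => μ * |x| ^ α * (1 + x ^ 2 * d ^ 2) ^ (γ/2) * t ^ b) := by
      have : Continuous (fun x : ℝ => (1 + x ^ 2 * d ^ 2) ^ (γ/2)) :=
        Continuous.rpow_const (by fun_prop) (fun x => Or.inl (hbase d x).ne')
      fun_prop
    exact (hcont.comp_continuous hc (harg d)).measurable
  · exact (hcont.comp_continuous hc0 harg0).measurable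
  · intro d x
    refine le_trans (hmono _ _ (harg0 x) ?_) (hb0' x)
    have h1 : 1 ≤ (1 + x ^ 2 * d ^ 2) ^ (γ/2) :=
      Real.one_le_rpow (by nlinarith [mul_nonneg (sq_nonneg x) (sq_nonneg d)]) (by linarith)
    have := mul_le_mul_of_nonneg_left h1 (harg0 x)
    linarith
  · intro x
    have hc : Continuous (fun d : ℝ => μ * |x| ^ α * (1 + x ^ 2 * d ^ 2) ^ (γ/2) * t ^ b) := by
      have : Continuous (fun d : ℝ => (1 + x ^ 2 * d ^ 2) ^ (γ/2)) :=
        Continuous.rpow_const (by fun_prop) (fun d => Or.inl (hbase d x).ne')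
      fun_prop
    have h := (hcont.comp_continuous hc (fun d => harg d x)).tendsto 0
    have e : μ * |x| ^ α * (1 + x ^ 2 * (0:ℝ) ^ 2) ^ (γ/2) * t ^ b = μ * t ^ b * |x| ^ α := by
      simp
      ring
    refine Tendsto.mono_left ?_ nhdsWithin_le_nhds
    beta_reduce
    rw [← e]
    exact h
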